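/- arXiv:1805.08562 — 2 statements merged into one kernel-verified Lean document; each statement's English description precedes it below -/
import Mathlib

section
/- (Ruling out bad lower-order models) Let h < d and suppose the data sequence satisfies (π̂_h(t) − π̂_d(t)) t ≥ α_{h,d} t for all t ≥ t_0(h), for some α_{h,d} > 0. Then for ContextTreeAdaHedge(D) with prior g_prop(h') = 2^{-2^{h'+1}} and nonincreasing learning rates with final value η_T, Σ_{t=1}^T q_t(h; η_t, g_prop) · w^{(h)}_{t,1−Y*_t}(η_t) ≤ t'_low(h) + 1/(η_T α_{h,d}), where t'_low(h) = max{ t_0(h), 2·2^d ln 2/(η_T α_{h,d}) }. -/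
open Finset

noncomputable section

namespace CTAH

/-- Truncation of a context in `{0,1}^D` to its sub-context of length `h`. -/
def trunc {D : ℕ} (h : ℕ) (x : Fin D → Bool) : Fin h → Bool :=
  fun i => if hi : (i : ℕ) < D then x ⟨i, hi⟩ else false

variable {D : ℕ}

/-- Cumulative contextual loss `L_{x,t,y} = ∑_{s=1}^t 1[X_s(h) = x, Y_s ≠ y]`. -/
def Lctx (X : ℕ → Fin D → Bool) (Y : ℕ → Bool) (h : ℕ)
    (x : Fin h → Bool) (t : ℕ) (y : Bool) : ℝ :=
  ∑ s ∈ Finset.Icc 1 t, if trunc h (X s) = x ∧ Y s ≠ y then 1 else 0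

/-- Appearance frequency `N_t(x) = ∑_{s=1}^{t-1} 1[X_s(h) = x]` of a sub-context. -/
def Nctx (X : ℕ → Fin D → Bool) (h t : ℕ) (x : Fin h → Bool) : ℕ :=
  ∑ s ∈ Finset.Icc 1 (t - 1), if trunc h (X s) = x then 1 else 0

/-- The gap `D_t(h) = L_{X_t(h),t,1−Y*_t} − L_{X_t(h),t,Y*_t}` between the wrong and the
true predictor at round `t`, for the current length-`h` sub-context; `Ys` is the true
best prediction sequence `Y*`. -/
def Dgap (X : ℕ → Fin D → Bool) (Y : ℕ → Bool) (Ys : ℕ → Bool) (h t : ℕ) : ℝ :=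
  Lctx X Y h (trunc h (X t)) t (!(Ys t)) - Lctx X Y h (trunc h (X t)) t (Ys t)

/-- Scaled estimated unpredictability `t · π̂_h(t) = ∑_{x(h)} min_y L_{x(h),t,y}`. -/
def hatPiT (X : ℕ → Fin D → Bool) (Y : ℕ → Bool) (h t : ℕ) : ℝ :=
  ∑ x : Fin h → Bool, min (Lctx X Y h x t false) (Lctx X Y h x t true)

/-- The model-order-proportional prior function `g_prop(h) = 2^{-2^{h+1}}`. -/
def gprop (h : ℕ) : ℝ := (2 : ℝ) ^ (-(2 : ℤ) ^ (h + 1))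

/-- Unnormalized posterior weight of model order `h`:
`Q_t(h; η, g) = g(h) ∏_{x(h)} (∑_y e^{−η L_{x(h),t,y}})`. -/
def Qmod (X : ℕ → Fin D → Bool) (Y : ℕ → Bool) (g : ℕ → ℝ) (η : ℝ) (t h : ℕ) : ℝ :=
  g h * ∏ x : Fin h → Bool, (∑ y : Bool, Real.exp (-η * Lctx X Y h x t y))

/-- Posterior probability `q_t(h; η, g) = Q_t(h)/∑_{h'=0}^D Q_t(h')` that the algorithm
selects the `h`-th order model. -/
def qmod (D : ℕ) (X : ℕ → Fin D → Bool) (Y : ℕ → Bool) (g : ℕ → ℝ) (η : ℝ)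
    (t h : ℕ) : ℝ :=
  Qmod X Y g η t h / ∑ h' ∈ Finset.range (D + 1), Qmod X Y g η t h'

/-- The probability `w^{(h)}_{t,1−Y*_t}(η) = e^{−η D_t(h)}/(1 + e^{−η D_t(h)})` with which
the uniform-prior `h`-th order algorithm predicts the wrong label `1 − Y*_t`. -/
def wbad (X : ℕ → Fin D → Bool) (Y : ℕ → Bool) (Ys : ℕ → Bool) (η : ℝ) (h t : ℕ) : ℝ :=
  Real.exp (-η * Dgap X Y Ys h t) / (1 + Real.exp (-η * Dgap X Y Ys h t))

/-!
The `∏ₓ ∑_y e^{-η L}` part of `Q_t(h)` is a soft minimum: it lies between `e^{-η t π̂_h(t)}` and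
`2^{2^h} e^{-η t π̂_h(t)}`. Comparing orders `h` and `d`, the prior `g_prop` absorbs the factor
`2^{2^h}` and costs `2^{2^{d+1}}`, so that
`q_t(h) ≤ exp(2·2^d ln 2 - η_t t (π̂_h(t) - π̂_d(t)))`.
Under the separation hypothesis this is at most `e^{-a(t - τ)}` for `t ≥ t₀`, with `a = η_T α_{h,d}`
and `τ = t'_low(h)`. Since also `q_t(h) ≤ 1`, the sum is at most
`∫₀^∞ min(1, e^{-a(x - τ)}) dx = τ + 1/a`.
-/

section CappedDecay

variable {a τ : ℝ}

/-- The exponential decay `e^{-a(x - τ)}` of rate `a`, capped at the value `1` which it takes at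
`x = τ`. It is the envelope used to bound posterior weights over all rounds at once. -/
def cappedDecay (a τ x : ℝ) : ℝ := min 1 (Real.exp (-(a * (x - τ))))

lemma antitone_cappedDecay (ha : 0 ≤ a) : Antitone (cappedDecay a τ) := by
  intro x y hxy
  unfold cappedDecay
  gcongr

lemma continuous_cappedDecay (a τ : ℝ) : Continuous (cappedDecay a τ) := by
  unfold cappedDecay
  fun_prop

lemma le_cappedDecay {q x : ℝ} (ha : 0 ≤ a) (hq : q ≤ 1)
    (hdecay : τ ≤ x → q ≤ Real.exp (-(a * (x - τ)))) : q ≤ cappedDecay a τ x := by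
  refine le_min hq ?_
  rcases le_total τ x with hτx | hxτ
  · exact hdecay hτx
  · exact hq.trans (Real.one_le_exp (neg_nonneg.2
      (mul_nonpos_of_nonneg_of_nonpos ha (sub_nonpos.2 hxτ))))

lemma integral_exp_neg_mul_sub (ha : a ≠ 0) (b : ℝ) :
    ∫ x in τ..b, Real.exp (-(a * (x - τ))) = (1 - Real.exp (-(a * (b - τ)))) / a := by
  simp only [← neg_mul]
  rw [intervalIntegral.integral_comp_sub_right (fun x ↦ Real.exp (-a * x)),
    intervalIntegral.integral_comp_mul_left _ (neg_ne_zero.2 ha), integral_exp]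
  simp only [sub_self, mul_zero, Real.exp_zero, smul_eq_mul]
  field_simp
  ring

lemma integral_cappedDecay_le_sub (a τ : ℝ) {b c : ℝ} (hbc : b ≤ c) :
    ∫ x in b..c, cappedDecay a τ x ≤ c - b := by
  calc ∫ x in b..c, cappedDecay a τ x
      ≤ ∫ _ in b..c, (1 : ℝ) := intervalIntegral.integral_mono hbc
        ((continuous_cappedDecay a τ).intervalIntegrable _ _) intervalIntegrable_const
        fun _ ↦ min_le_left _ _
    _ = c - b := by simp

lemma integral_cappedDecay_tail_le (ha : 0 < a) {b : ℝ} (hτb : τ ≤ b) :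
    ∫ x in τ..b, cappedDecay a τ x ≤ 1 / a := by
  calc ∫ x in τ..b, cappedDecay a τ x
      ≤ ∫ x in τ..b, Real.exp (-(a * (x - τ))) := intervalIntegral.integral_mono hτb
        ((continuous_cappedDecay a τ).intervalIntegrable _ _)
        (Continuous.intervalIntegrable (by fun_prop) _ _) fun _ ↦ min_le_right _ _
    _ = (1 - Real.exp (-(a * (b - τ)))) / a := integral_exp_neg_mul_sub ha.ne' b
    _ ≤ 1 / a := by
      gcongr
      exact sub_le_self _ (Real.exp_pos _).le

lemma integral_cappedDecay_le (ha : 0 < a) (hτ : 0 ≤ τ) {b : ℝ} (hb : 0 ≤ b) :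
    ∫ x in 0..b, cappedDecay a τ x ≤ τ + 1 / a := by
  have hint (u v : ℝ) : IntervalIntegrable (cappedDecay a τ) MeasureTheory.volume u v :=
    (continuous_cappedDecay a τ).intervalIntegrable u v
  rcases le_total τ b with hτb | hbτ
  · rw [← intervalIntegral.integral_add_adjacent_intervals (hint 0 τ) (hint τ b)]
    have hhead := integral_cappedDecay_le_sub a τ hτ
    have htail := integral_cappedDecay_tail_le ha hτb
    linarith
  · have hhead := integral_cappedDecay_le_sub a τ hb
    have : 0 < 1 / a := one_div_pos.2 ha
    linarith

lemma sum_cappedDecay_le (ha : 0 < a) (hτ : 0 ≤ τ) (T : ℕ) :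
    ∑ t ∈ Icc 1 T, cappedDecay a τ t ≤ τ + 1 / a := by
  calc ∑ t ∈ Icc 1 T, cappedDecay a τ t
      = ∑ i ∈ range T, cappedDecay a τ (0 + (i + 1 : ℕ)) := by
        rw [← Ico_add_one_right_eq_Icc, sum_Ico_eq_sum_range]
        simp [add_comm]
    _ ≤ ∫ x in 0..(0 + T : ℝ), cappedDecay a τ x :=
        ((antitone_cappedDecay ha.le).antitoneOn _).sum_le_integral
    _ ≤ τ + 1 / a := integral_cappedDecay_le ha hτ (by positivity)

end CappedDecay

section SoftMin

lemma exp_neg_mul_min_le_add (η u v : ℝ) :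
    Real.exp (-η * min u v) ≤ Real.exp (-η * u) + Real.exp (-η * v) := by
  rcases min_choice u v with hmin | hmin <;> rw [hmin]
  · exact le_add_of_nonneg_right (Real.exp_pos _).le
  · exact le_add_of_nonneg_left (Real.exp_pos _).le

lemma add_exp_le_two_mul_exp_neg_mul_min {η : ℝ} (hη : 0 ≤ η) (u v : ℝ) :
    Real.exp (-η * u) + Real.exp (-η * v) ≤ 2 * Real.exp (-η * min u v) := by
  have hneg : -η ≤ 0 := neg_nonpos.2 hη
  rw [two_mul]
  exact add_le_add
    (Real.exp_le_exp.2 (mul_le_mul_of_nonpos_left (min_le_left u v) hneg))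
    (Real.exp_le_exp.2 (mul_le_mul_of_nonpos_left (min_le_right u v) hneg))

end SoftMin

section Posterior

variable (X : ℕ → Fin D → Bool) (Y : ℕ → Bool) {g : ℕ → ℝ} {η : ℝ} (t : ℕ) {d h : ℕ}

lemma exp_neg_mul_hatPiT (η : ℝ) (h : ℕ) :
    Real.exp (-η * hatPiT X Y h t) = ∏ x : Fin h → Bool,
      Real.exp (-η * min (Lctx X Y h x t false) (Lctx X Y h x t true)) := by
  rw [hatPiT, mul_sum, Real.exp_sum]

lemma mul_exp_le_Qmod (hg : 0 ≤ g h) (η : ℝ) :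
    g h * Real.exp (-η * hatPiT X Y h t) ≤ Qmod X Y g η t h := by
  rw [exp_neg_mul_hatPiT, Qmod]
  gcongr with x
  rw [Fintype.sum_bool, add_comm]
  exact exp_neg_mul_min_le_add ..

lemma Qmod_le_mul_exp (hg : 0 ≤ g h) (hη : 0 ≤ η) :
    Qmod X Y g η t h ≤ g h * 2 ^ 2 ^ h * Real.exp (-η * hatPiT X Y h t) := by
  have hpow : (2 : ℝ) ^ 2 ^ h = ∏ _x : Fin h → Bool, 2 := by simp
  rw [exp_neg_mul_hatPiT, mul_assoc, hpow, ← prod_mul_distrib, Qmod]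
  gcongr with x
  rw [Fintype.sum_bool, add_comm]
  exact add_exp_le_two_mul_exp_neg_mul_min hη ..

lemma Qmod_nonneg (hg : 0 ≤ g h) (η : ℝ) : 0 ≤ Qmod X Y g η t h :=
  (mul_nonneg hg (Real.exp_pos _).le).trans (mul_exp_le_Qmod X Y t hg η)

lemma Qmod_le_sum (hg : ∀ k, 0 ≤ g k) (η : ℝ) (hh : h ≤ D) :
    Qmod X Y g η t h ≤ ∑ k ∈ range (D + 1), Qmod X Y g η t k :=
  single_le_sum (fun k _ ↦ Qmod_nonneg X Y t (hg k) η) (mem_range_succ_iff.2 hh)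

lemma qmod_nonneg (hg : ∀ k, 0 ≤ g k) (η : ℝ) (h : ℕ) : 0 ≤ qmod D X Y g η t h :=
  div_nonneg (Qmod_nonneg X Y t (hg h) η) (sum_nonneg fun k _ ↦ Qmod_nonneg X Y t (hg k) η)

lemma qmod_le_one (hg : ∀ k, 0 ≤ g k) (η : ℝ) (hh : h ≤ D) : qmod D X Y g η t h ≤ 1 :=
  div_le_one_of_le₀ (Qmod_le_sum X Y t hg η hh)
    (sum_nonneg fun k _ ↦ Qmod_nonneg X Y t (hg k) η)

lemma qmod_le_prior_ratio_mul_exp (hg : ∀ k, 0 ≤ g k) (hgd : 0 < g d) (hη : 0 ≤ η)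
    (hd : d ≤ D) (h : ℕ) :
    qmod D X Y g η t h ≤
      g h * 2 ^ 2 ^ h / g d * Real.exp (-η * (hatPiT X Y h t - hatPiT X Y d t)) := by
  have hlower : g d * Real.exp (-η * hatPiT X Y d t) ≤ ∑ k ∈ range (D + 1), Qmod X Y g η t k :=
    (mul_exp_le_Qmod X Y t hgd.le η).trans (Qmod_le_sum X Y t hg η hd)
  have hupper := Qmod_le_mul_exp X Y t (hg h) hη
  calc qmod D X Y g η t h
      ≤ g h * 2 ^ 2 ^ h * Real.exp (-η * hatPiT X Y h t) /
          (g d * Real.exp (-η * hatPiT X Y d t)) :=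
        div_le_div₀ ((Qmod_nonneg X Y t (hg h) η).trans hupper) hupper (by positivity) hlower
    _ = _ := by rw [mul_div_mul_comm, ← Real.exp_sub, mul_sub]

end Posterior

section ProportionalPrior

lemma gprop_eq_inv_pow (h : ℕ) : gprop h = ((2 : ℝ) ^ 2 ^ (h + 1))⁻¹ := by
  rw [gprop, zpow_neg]
  norm_cast

lemma gprop_pos (h : ℕ) : 0 < gprop h := zpow_pos two_pos _

lemma gprop_mul_pow_le_one (h : ℕ) : gprop h * 2 ^ 2 ^ h ≤ 1 := by
  rw [gprop_eq_inv_pow]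
  refine inv_mul_le_one_of_le₀ ?_ (by positivity)
  gcongr <;> norm_num

lemma inv_gprop_eq_exp (d : ℕ) : (gprop d)⁻¹ = Real.exp (2 * 2 ^ d * Real.log 2) := by
  rw [gprop_eq_inv_pow, inv_inv, ← Real.exp_log (pow_pos two_pos _), Real.log_pow]
  push_cast
  ring_nf

variable (X : ℕ → Fin D → Bool) (Y : ℕ → Bool) {t d h : ℕ} {η : ℝ}

lemma qmod_gprop_le_exp (hη : 0 ≤ η) (hd : d ≤ D) (t h : ℕ) :
    qmod D X Y gprop η t h ≤
      Real.exp (2 * 2 ^ d * Real.log 2 - η * (hatPiT X Y h t - hatPiT X Y d t)) := by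
  calc qmod D X Y gprop η t h
      ≤ gprop h * 2 ^ 2 ^ h / gprop d * Real.exp (-η * (hatPiT X Y h t - hatPiT X Y d t)) :=
        qmod_le_prior_ratio_mul_exp X Y t (fun k ↦ (gprop_pos k).le) (gprop_pos d) hη hd h
    _ ≤ 1 / gprop d * Real.exp (-η * (hatPiT X Y h t - hatPiT X Y d t)) := by
        have := gprop_pos d
        gcongr
        exact gprop_mul_pow_le_one h
    _ = _ := by rw [one_div, inv_gprop_eq_exp, ← Real.exp_add, neg_mul, ← sub_eq_add_neg]

lemma qmod_gprop_le_cappedDecay {η₀ α τ : ℝ} (hη₀ : 0 < η₀) (hη : η₀ ≤ η) (hα : 0 < α)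
    (hd : d ≤ D) (hh : h ≤ D) (hτ : 2 * 2 ^ d * Real.log 2 / (η₀ * α) ≤ τ)
    (hsep : τ ≤ t → α * t ≤ hatPiT X Y h t - hatPiT X Y d t) :
    qmod D X Y gprop η t h ≤ cappedDecay (η₀ * α) τ t := by
  have ha : 0 < η₀ * α := mul_pos hη₀ hα
  refine le_cappedDecay ha.le (qmod_le_one X Y t (fun k ↦ (gprop_pos k).le) η hh) fun hτt ↦ ?_
  have hprior : 2 * 2 ^ d * Real.log 2 ≤ τ * (η₀ * α) := (div_le_iff₀ ha).1 hτ
  have hgap : η₀ * (α * t) ≤ η * (hatPiT X Y h t - hatPiT X Y d t) :=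
    mul_le_mul hη (hsep hτt) (by positivity) (hη₀.le.trans hη)
  refine (qmod_gprop_le_exp X Y (hη₀.le.trans hη) hd t h).trans (Real.exp_le_exp.2 ?_)
  linarith

end ProportionalPrior

/-- Ruling out bad lower-order models.
Let `h < d` and suppose the data sequence satisfies `(π̂_h(t) − π̂_d(t)) t ≥ α_{h,d} t`
for all `t ≥ t₀`, for some `α_{h,d} > 0`. Then, for ContextTreeAdaHedge(D) with the
prior `g_prop` and nonincreasing learning rates with final value `η_T > 0`,
`∑_{t=1}^T q_t(h; η_t, g_prop) w^{(h)}_{t,1−Y*_t}(η_t) ≤ t'_low(h) + 1/(η_T α_{h,d})`,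
where `t'_low(h) = max {t₀, 2·2^d ln 2/(η_T α_{h,d})}`. -/
theorem ruling_out_lower_order (D d h : ℕ) (hdD : d ≤ D) (hhd : h < d)
    (X : ℕ → Fin D → Bool) (Y : ℕ → Bool)
    (αhd : ℝ) (hα : 0 < αhd) (t₀ : ℝ) (ht₀ : 0 < t₀)
    (η : ℕ → ℝ) (hmono : ∀ s t : ℕ, s ≤ t → η t ≤ η s) (hpos : ∀ t, 0 < η t)
    (T : ℕ)
    (hsep : ∀ t : ℕ, t₀ ≤ (t : ℝ) →
      αhd * (t : ℝ) ≤ hatPiT X Y h t - hatPiT X Y d t)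
    (wb : ℕ → ℝ) (hwb0 : ∀ t, 0 ≤ wb t) (hwb1 : ∀ t, wb t ≤ 1) :
    ∑ t ∈ Finset.Icc 1 T, qmod D X Y gprop (η t) t h * wb t ≤
      max t₀ (2 * 2 ^ d * Real.log 2 / (η T * αhd)) + 1 / (η T * αhd) := by
  have hqw (t : ℕ) (ht : t ∈ Icc 1 T) :
      qmod D X Y gprop (η t) t h * wb t ≤
        cappedDecay (η T * αhd) (max t₀ (2 * 2 ^ d * Real.log 2 / (η T * αhd))) t :=
    (mul_le_of_le_one_right (qmod_nonneg X Y t (fun k ↦ (gprop_pos k).le) (η t) h) (hwb1 t)).trans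
      (qmod_gprop_le_cappedDecay X Y (hpos T) (hmono t T (mem_Icc.1 ht).2) hα hdD
        (hhd.le.trans hdD) (le_max_right _ _) fun ht' ↦ hsep t ((le_max_left _ _).trans ht'))
  exact (sum_le_sum hqw).trans
    (sum_cappedDecay_le (mul_pos (hpos T) hα) (ht₀.le.trans (le_max_left _ _)) T)

end CTAH
end
end

section
/- (Equivalence of the naive and efficient updates) For any prior function g: {0,...,D} → ℝ>0, any learning rate η_t > 0, and any cumulative contextual losses, the tree-expert exponential weights update and the efficient contextual update induce the same prediction distribution: for every y ∈ {0,1}, Σ_{f ∈ F_D : f(X_t) = y} w^tree_{t,f}(η_t; g) = w_{t,y}(η_t; g). Equivalently (the key distributive-law identity): Σ_{f∈F_D} (Σ_{h=order(f)}^D g(h)) Π_{x(h)∈{0,1}^h} e^{−η_t L_{x(h),t,f(x(h))}} = Σ_{h=0}^D g(h) Π_{x(h)∈{0,1}^h} ( Σ_{y∈{0,1}} e^{−η_t L_{x(h),t,y}} ). -/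
open Finset

noncomputable section

namespace CTAH

/-- The order of a tree expert `f ∈ F_D`: the least `e` such that `f` factors through
the length-`e` sub-context. -/
def order {D : ℕ} (f : (Fin D → Bool) → Bool) : ℕ :=
  sInf {e | ∃ f' : (Fin e → Bool) → Bool, ∀ x : Fin D → Bool, f x = f' (trunc e x)}

variable {D : ℕ}

/-- Unnormalized prior weight put on a tree expert by the prior function `g`:
`∑_{h = order f}^{D} g h`. -/
def pri (D : ℕ) (g : ℕ → ℝ) (f : (Fin D → Bool) → Bool) : ℝ :=
  ∑ h ∈ Finset.Icc (order f) D, g h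

/-- Cumulative loss of a tree expert `f ∈ F_D`, written contextually:
`L_{t,f} = ∑_{x(D)} L_{x(D),t,f(x(D))}`. -/
def Ltree (X : ℕ → Fin D → Bool) (Y : ℕ → Bool) (f : (Fin D → Bool) → Bool)
    (t : ℕ) : ℝ :=
  ∑ x : Fin D → Bool, Lctx X Y D x t (f x)

/-- The reweighted prior `g'(h; η_t)` of the efficient update. -/
def gEff (X : ℕ → Fin D → Bool) (Y : ℕ → Bool) (g : ℕ → ℝ) (η : ℝ) (t h : ℕ) : ℝ :=
  g h * ∏ x ∈ Finset.univ.erase (trunc h (X t)),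
    (∑ y : Bool, Real.exp (-η * Lctx X Y h x t y))

/-!
For `h ≤ D`, composing with the truncation map embeds `F_h` into `F_D` with image the experts of
order at most `h`, and the embedding preserves cumulative losses. Exchanging the sum over experts
with the sum over `h` defining the prior therefore turns the naive mixture into
`∑ h ≤ D, g h * ∑ f ∈ F_h, e^(-η L_f)`. For each `h` the exponential factorizes over contexts, so
the inner sum is a product of sums; restricting `f` at `X_t` only affects the factor at `X_t(h)`.
-/

lemma sum_apply_mul_prod {R ι κ : Type*} [CommSemiring R] [Fintype ι] [DecidableEq ι] [Fintype κ]
    (a : ι → κ → R) (c : κ → R) (i₀ : ι) :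
    ∑ f : ι → κ, c (f i₀) * ∏ i, a i (f i) =
      (∏ i ∈ univ.erase i₀, ∑ k, a i k) * ∑ k, c k * a i₀ k := by
  -- Absorbing `c` into the factor at `i₀` reduces the claim to the plain distributive law.
  let b : ι → κ → R := fun i k => (if i = i₀ then c k else 1) * a i k
  have prod_b (f : ι → κ) : ∏ i, b i (f i) = c (f i₀) * ∏ i, a i (f i) := by
    simp only [b, prod_mul_distrib, prod_ite_eq', mem_univ, if_true]
  have sum_b {i : ι} (hi : i ∈ univ.erase i₀) : ∑ k, b i k = ∑ k, a i k := by
    simp [b, ne_of_mem_erase hi]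
  calc ∑ f : ι → κ, c (f i₀) * ∏ i, a i (f i)
      = ∏ i, ∑ k, b i k := by simp only [Fintype.prod_sum, prod_b]
    _ = (∏ i ∈ univ.erase i₀, ∑ k, b i k) * ∑ k, b i₀ k :=
        (prod_erase_mul _ _ (mem_univ i₀)).symm
    _ = (∏ i ∈ univ.erase i₀, ∑ k, a i k) * ∑ k, c k * a i₀ k := by
        rw [prod_congr rfl fun _ => sum_b]
        simp [b]

lemma trunc_self (x : Fin D → Bool) : trunc D x = x := by
  funext i
  simp [trunc]

lemma trunc_trunc {e h : ℕ} (heh : e ≤ h) (x : Fin D → Bool) :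
    trunc e (trunc h x) = trunc e x := by
  funext i
  simp [trunc, i.isLt.trans_le heh]

lemma trunc_surjective {h : ℕ} (hD : h ≤ D) : Function.Surjective (trunc (D := D) h) :=
  fun y => ⟨trunc D y, by rw [trunc_trunc hD, trunc_self]⟩

lemma exists_comp_trunc_order_eq (f : (Fin D → Bool) → Bool) :
    ∃ f' : (Fin (order f) → Bool) → Bool, f' ∘ trunc (order f) = f := by
  have factors_nonempty : {e | ∃ f' : (Fin e → Bool) → Bool, ∀ x, f x = f' (trunc e x)}.Nonempty :=
    ⟨D, f, fun x => by rw [trunc_self]⟩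
  obtain ⟨f', hf'⟩ := Nat.sInf_mem factors_nonempty
  exact ⟨f', funext fun x => (hf' x).symm⟩

lemma order_le_iff {h : ℕ} {f : (Fin D → Bool) → Bool} :
    order f ≤ h ↔ ∃ f' : (Fin h → Bool) → Bool, f' ∘ trunc h = f := by
  constructor
  · intro hf
    obtain ⟨f', hf'⟩ := exists_comp_trunc_order_eq f
    refine ⟨f' ∘ trunc (order f), funext fun x => ?_⟩
    simpa only [Function.comp_apply, trunc_trunc hf] using congrFun hf' x
  · rintro ⟨f', rfl⟩
    exact Nat.sInf_le ⟨f', fun _ => rfl⟩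

lemma sum_filter_order_le {M : Type*} [AddCommMonoid M] {h : ℕ} (hD : h ≤ D)
    (F : ((Fin D → Bool) → Bool) → M) :
    ∑ f with order f ≤ h, F f = ∑ f : (Fin h → Bool) → Bool, F (f ∘ trunc h) := by
  have filter_order_le_eq_image : univ.filter (fun f : (Fin D → Bool) → Bool => order f ≤ h) =
      univ.image (fun f : (Fin h → Bool) → Bool => f ∘ trunc h) := by
    ext f
    simp [order_le_iff]
  rw [filter_order_le_eq_image, sum_image (trunc_surjective hD).injective_comp_right.injOn]

lemma pri_eq_sum_ite (g : ℕ → ℝ) (f : (Fin D → Bool) → Bool) :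
    pri D g f = ∑ h ∈ range (D + 1), if order f ≤ h then g h else 0 := by
  rw [pri, ← sum_filter]
  congr 1
  ext h
  simp only [mem_Icc, mem_filter, mem_range]
  omega

lemma sum_pri_mul (g : ℕ → ℝ) (F : ((Fin D → Bool) → Bool) → ℝ) :
    ∑ f, pri D g f * F f =
      ∑ h ∈ range (D + 1), g h * ∑ f : (Fin h → Bool) → Bool, F (f ∘ trunc h) := by
  simp only [pri_eq_sum_ite, sum_mul, ite_mul, zero_mul]
  rw [sum_comm]
  refine sum_congr rfl fun h hh => ?_
  rw [← sum_filter, ← mul_sum, sum_filter_order_le (mem_range_succ_iff.mp hh)]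

section Loss

variable (X : ℕ → Fin D → Bool) (Y : ℕ → Bool)

lemma sum_Lctx {h : ℕ} (f : (Fin h → Bool) → Bool) (t : ℕ) :
    ∑ x, Lctx X Y h x t (f x) = ∑ s ∈ Icc 1 t, if Y s ≠ f (trunc h (X s)) then 1 else 0 := by
  simp only [Lctx]
  rw [sum_comm]
  simp [ite_and]

lemma Ltree_comp_trunc {h : ℕ} (f : (Fin h → Bool) → Bool) (t : ℕ) :
    Ltree X Y (f ∘ trunc h) t = ∑ x, Lctx X Y h x t (f x) := by
  simp only [Ltree, sum_Lctx, Function.comp_apply, trunc_self]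

lemma exp_Ltree_comp_trunc (η : ℝ) {h : ℕ} (f : (Fin h → Bool) → Bool) (t : ℕ) :
    Real.exp (-η * Ltree X Y (f ∘ trunc h) t) = ∏ x, Real.exp (-η * Lctx X Y h x t (f x)) := by
  rw [Ltree_comp_trunc, mul_sum, Real.exp_sum]

lemma gEff_mul_sum_exp (g : ℕ → ℝ) (η : ℝ) (t h : ℕ) :
    gEff X Y g η t h * ∑ y, Real.exp (-η * Lctx X Y h (trunc h (X t)) t y) =
      g h * ∏ x, ∑ y, Real.exp (-η * Lctx X Y h x t y) := by
  rw [gEff, mul_assoc, prod_erase_mul _ _ (mem_univ _)]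

lemma sum_pri_mul_apply_mul_exp_Ltree (g : ℕ → ℝ) (η : ℝ) (t : ℕ) (c : Bool → ℝ) :
    ∑ f : (Fin D → Bool) → Bool, pri D g f * (c (f (X t)) * Real.exp (-η * Ltree X Y f t)) =
      ∑ h ∈ range (D + 1),
        gEff X Y g η t h * ∑ y, c y * Real.exp (-η * Lctx X Y h (trunc h (X t)) t y) := by
  rw [sum_pri_mul]
  refine sum_congr rfl fun h _ => ?_
  simp only [exp_Ltree_comp_trunc, Function.comp_apply]
  rw [sum_apply_mul_prod (fun x y => Real.exp (-η * Lctx X Y h x t y)), gEff, mul_assoc]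

lemma sum_pri_mul_exp_Ltree (g : ℕ → ℝ) (η : ℝ) (t : ℕ) :
    ∑ f : (Fin D → Bool) → Bool, pri D g f * Real.exp (-η * Ltree X Y f t) =
      ∑ h ∈ range (D + 1),
        gEff X Y g η t h * ∑ y, Real.exp (-η * Lctx X Y h (trunc h (X t)) t y) := by
  simpa only [one_mul] using sum_pri_mul_apply_mul_exp_Ltree X Y g η t fun _ => 1

lemma sum_ite_pri_mul_exp_Ltree (g : ℕ → ℝ) (η : ℝ) (t : ℕ) (y : Bool) :
    (∑ f : (Fin D → Bool) → Bool,
        if f (X t) = y then pri D g f * Real.exp (-η * Ltree X Y f t) else 0) =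
      ∑ h ∈ range (D + 1),
        gEff X Y g η t h * Real.exp (-η * Lctx X Y h (trunc h (X t)) t y) := by
  simpa using sum_pri_mul_apply_mul_exp_Ltree X Y g η t fun y' => if y' = y then 1 else 0

end Loss

/-- Equivalence of the naive and efficient updates.
For any positive prior function `g`, any learning rate `η > 0`, and any cumulative
contextual losses, the tree-expert exponential-weights update and the efficient
contextual update induce the same prediction distribution:
`∑_{f : f(X_t) = y} w^tree_{t,f}(η; g) = w_{t,y}(η; g)` for every `y ∈ {0,1}`.
Equivalently, the key distributive-law identity
`∑_f (∑_{h = order f}^D g h) ∏_{x} e^{−η L_{x,t,f(x)}}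
  = ∑_{h=0}^D g h ∏_{x(h)} (∑_y e^{−η L_{x(h),t,y}})` holds. -/
theorem naive_efficient_equivalence (D t : ℕ)
    (g : ℕ → ℝ) (hg : ∀ h, 0 < g h) (η : ℝ) (hη : 0 < η)
    (X : ℕ → Fin D → Bool) (Y : ℕ → Bool) :
    (∀ y : Bool,
      (∑ f : (Fin D → Bool) → Bool,
          if f (X t) = y then pri D g f * Real.exp (-η * Ltree X Y f t) else 0) /
        (∑ f : (Fin D → Bool) → Bool, pri D g f * Real.exp (-η * Ltree X Y f t)) =
      (∑ h ∈ Finset.range (D + 1),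
          gEff X Y g η t h * Real.exp (-η * Lctx X Y h (trunc h (X t)) t y)) /
        (∑ h ∈ Finset.range (D + 1),
          gEff X Y g η t h *
            (∑ y' : Bool, Real.exp (-η * Lctx X Y h (trunc h (X t)) t y')))) ∧
    (∑ f : (Fin D → Bool) → Bool,
        pri D g f * ∏ x : Fin D → Bool, Real.exp (-η * Lctx X Y D x t (f x))) =
      ∑ h ∈ Finset.range (D + 1),
        g h * ∏ x : Fin h → Bool, (∑ y : Bool, Real.exp (-η * Lctx X Y h x t y)) := by
  refine ⟨fun y => ?_, ?_⟩
  · rw [sum_ite_pri_mul_exp_Ltree, sum_pri_mul_exp_Ltree]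
  · have exp_Ltree (f : (Fin D → Bool) → Bool) :
        Real.exp (-η * Ltree X Y f t) = ∏ x, Real.exp (-η * Lctx X Y D x t (f x)) := by
      rw [Ltree, mul_sum, Real.exp_sum]
    simp only [← exp_Ltree, sum_pri_mul_exp_Ltree, gEff_mul_sum_exp]

end CTAH
end
end
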